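/- arXiv:1702.01180 — 3 statements merged into one kernel-verified Lean document; each statement's English description precedes it below -/
import Mathlib

section
/- Let K be the reference tetrahedron in ℝ³ and let p ≥ 1 be an integer. Let Σ = {Φ ∈ (P_p)³ : Φ·n = 0 on ∂K} be the space of vector polynomials of degree at most p whose normal component vanishes on each face of K. Then the image of Σ under the divergence operator equals the space of polynomials of degree at most p−1 with zero mean over K, i.e. {div Φ : Φ ∈ Σ} = {q ∈ P_{p−1} : ∫_K q dx = 0}. -/
open MeasureTheory MvPolynomial Real

noncomputable section

/-- Vertices of the reference tetrahedron: v0=(0,0,0), v1=(1,0,0), v2=(0,1,0), v3=(0,0,1). -/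
def vtx : Fin 4 → Fin 3 → ℝ :=
  ![![0,0,0], ![1,0,0], ![0,1,0], ![0,0,1]]

/-- Barycentric coordinates λ₀ = 1-x-y-z, λ₁ = x, λ₂ = y, λ₃ = z. -/
def lam : Fin 4 → (Fin 3 → ℝ) → ℝ :=
  ![fun x => 1 - x 0 - x 1 - x 2, fun x => x 0, fun x => x 1, fun x => x 2]

/-- The reference tetrahedron K = {x : λ_j(x) ≥ 0 for all j}. -/
def Ktet : Set (Fin 3 → ℝ) := {x | ∀ j : Fin 4, 0 ≤ lam j x}

/-- Face F_j = {x ∈ K : λ_j(x) = 0}. -/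
def faceK (j : Fin 4) : Set (Fin 3 → ℝ) := {x ∈ Ktet | lam j x = 0}

/-- Outward unit normals of the four faces of K. -/
def normalK : Fin 4 → Fin 3 → ℝ :=
  ![fun _ => 1 / Real.sqrt 3, ![-1,0,0], ![0,-1,0], ![0,0,-1]]

/-- (Constant) gradients of the barycentric coordinates. -/
def gradLam : Fin 4 → Fin 3 → ℝ :=
  ![![-1,-1,-1], ![1,0,0], ![0,1,0], ![0,0,1]]

/-- Divergence of a vector polynomial. -/
def divP (Φ : Fin 3 → MvPolynomial (Fin 3) ℝ) : MvPolynomial (Fin 3) ℝ :=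
  ∑ i, MvPolynomial.pderiv i (Φ i)

/-- The normal component of the vector polynomial Φ vanishes on every face of K. -/
def normalVanish (Φ : Fin 3 → MvPolynomial (Fin 3) ℝ) : Prop :=
  ∀ j : Fin 4, ∀ q ∈ faceK j, ∑ i, MvPolynomial.eval q (Φ i) * normalK j i = 0

/-- Divergence of a vector field (as a function). -/
def divF (Φ : (Fin 3 → ℝ) → (Fin 3 → ℝ)) (x : Fin 3 → ℝ) : ℝ :=
  ∑ i, fderiv ℝ Φ x (Pi.single i 1) i

/-- The normal component of the vector field Φ vanishes on every face of K. -/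
def normalVanishF (Φ : (Fin 3 → ℝ) → (Fin 3 → ℝ)) : Prop :=
  ∀ j : Fin 4, ∀ q ∈ faceK j, ∑ i, Φ q i * normalK j i = 0

namespace TetAux

abbrev MP := MvPolynomial (Fin 3) ℝ

lemma mem_Ktet {x : Fin 3 → ℝ} : x ∈ Ktet ↔ (∀ i, 0 ≤ x i) ∧ ∑ i, x i ≤ 1 := by
  simp only [Ktet, Set.mem_ofPred_eq, lam, Fin.forall_fin_succ, Fin.sum_univ_three]
  simp
  constructor
  · rintro ⟨h0, h1, h2, h3⟩
    exact ⟨⟨h1, h2, h3⟩, by linarith⟩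
  · rintro ⟨⟨h1, h2, h3⟩, h0⟩
    exact ⟨by linarith, h1, h2, h3⟩

lemma isClosed_Ktet : IsClosed Ktet := by
  have : Ktet = {x : Fin 3 → ℝ | (∀ i, 0 ≤ x i)} ∩ {x | ∑ i, x i ≤ 1} := by
    ext x; exact mem_Ktet
  rw [this]
  apply IsClosed.inter
  · simp only [Set.ofPred_forall]
    exact isClosed_iInter fun i => isClosed_le continuous_const (continuous_apply i)
  · exact isClosed_le (by fun_prop) continuous_const

lemma isCompact_Ktet : IsCompact Ktet := by
  refine IsCompact.of_isClosed_subset (isCompact_Icc (a := (0 : Fin 3 → ℝ)) (b := 1))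
    isClosed_Ktet ?_
  intro x hx
  obtain ⟨h1, h2⟩ := mem_Ktet.1 hx
  refine ⟨fun i => h1 i, fun i => ?_⟩
  have := Finset.single_le_sum (f := x) (fun i _ => h1 i) (Finset.mem_univ i)
  exact this.trans h2

lemma integrableOn_eval (q : MP) : IntegrableOn (fun x => MvPolynomial.eval x q) Ktet :=
  (MvPolynomial.continuous_eval q).continuousOn.integrableOn_compact isCompact_Ktet

/-- The integral over K as a linear functional. -/
def I : MP →ₗ[ℝ] ℝ where
  toFun q := ∫ x in Ktet, MvPolynomial.eval x q
  map_add' a b := by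
    simp only [map_add]
    exact integral_add (integrableOn_eval a) (integrableOn_eval b)
  map_smul' c a := by
    simp only [smul_eval, RingHom.id_apply, smul_eq_mul]
    exact integral_const_mul c _

lemma I_apply (q : MP) : I q = ∫ x in Ktet, MvPolynomial.eval x q := rfl

lemma I_one : I 1 ≠ 0 := by
  have h : 0 < volume Ktet := by
    refine lt_of_lt_of_le ?_ (measure_mono (s := Set.pi Set.univ (fun _ : Fin 3 => Set.Ioo (0:ℝ) (1/3))) ?_)
    · rw [Real.volume_pi_Ioo]
      simp only [sub_zero, Finset.prod_const]
      exact ENNReal.pow_pos (by simp) _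
    · intro x hx
      simp only [Set.mem_pi, Set.mem_univ, true_imp_iff, Set.mem_Ioo] at hx
      refine mem_Ktet.2 ⟨fun i => (hx i).1.le, ?_⟩
      rw [Fin.sum_univ_three]
      linarith [(hx 0).2, (hx 1).2, (hx 2).2]
  have h2 : volume Ktet ≠ ⊤ := isCompact_Ktet.measure_lt_top.ne
  rw [I_apply]
  simp only [map_one, integral_const, smul_eq_mul, mul_one]
  rw [measureReal_def, Measure.restrict_apply_univ]
  exact (ENNReal.toReal_pos h.ne' h2).ne'

lemma hasDerivAt_eval (i : Fin 3) (y : Fin 2 → ℝ) (f : MP) (t : ℝ) :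
    HasDerivAt (fun t : ℝ => MvPolynomial.eval (i.insertNth t y : Fin 3 → ℝ) f)
      (MvPolynomial.eval (i.insertNth t y : Fin 3 → ℝ) (pderiv i f)) t := by
  induction f using MvPolynomial.induction_on with
  | C a => simpa using hasDerivAt_const t a
  | add p q hp hq => 
    simp only [map_add]
    exact hp.add hq
  | mul_X p n hp =>
    have hX : HasDerivAt (fun t : ℝ => (i.insertNth t y : Fin 3 → ℝ) n)
        (MvPolynomial.eval (i.insertNth t y : Fin 3 → ℝ) (pderiv i (X n : MP))) t := by
      rcases Fin.eq_self_or_eq_succAbove i n with h | ⟨j, h⟩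
      · subst h
        simp only [Fin.insertNth_apply_same, pderiv_X_self, map_one]
        exact hasDerivAt_id t
      · subst h
        rw [pderiv_X_of_ne (Fin.succAbove_ne i j)]
        simpa using hasDerivAt_const t (y j)
    have := hp.mul hX
    rw [pderiv_mul]
    simp only [map_add, map_mul, eval_X]
    exact this

/-- The polynomial λ₀. -/
def l0 : MP := 1 - ∑ i, X i

lemma eval_l0 (x : Fin 3 → ℝ) : MvPolynomial.eval x l0 = 1 - ∑ i, x i := by
  simp [l0]

lemma I_T (i : Fin 3) (g : MP) : I (pderiv i (l0 * (X i * g))) = 0 := by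
  set f : MP := l0 * (X i * g) with hf
  set F : (Fin 3 → ℝ) → ℝ := Ktet.indicator (fun x => MvPolynomial.eval x (pderiv i f)) with hF
  have hFi : Integrable F := (integrable_indicator_iff isClosed_Ktet.measurableSet).2
    (integrableOn_eval _)
  rw [I_apply, ← integral_indicator isClosed_Ktet.measurableSet]
  change ∫ x, F x = 0
  have mp := (volume_preserving_piFinSuccAbove (fun _ : Fin 3 => ℝ) i).symm
  rw [← mp.integral_comp', Measure.volume_eq_prod, integral_prod_symm]
  swap
  · rw [← Measure.volume_eq_prod]
    exact mp.integrable_comp_of_integrable hFi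
  have : ∀ y : Fin 2 → ℝ, ∫ t : ℝ, F (i.insertNth t y) = 0 := by
    intro y
    by_cases hy : (∀ j, 0 ≤ y j) ∧ ∑ j, y j ≤ 1
    · have hmem : ∀ t : ℝ, (i.insertNth t y : Fin 3 → ℝ) ∈ Ktet ↔ t ∈ Set.Icc 0 (1 - ∑ j, y j) := by
        intro t
        rw [mem_Ktet, Fin.sum_univ_succAbove _ i, Fin.forall_iff_succAbove i]
        simp only [Fin.insertNth_apply_same, Fin.insertNth_apply_succAbove, Set.mem_Icc]
        constructor
        · rintro ⟨⟨h1, h2⟩, h3⟩; exact ⟨h1, by linarith⟩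
        · rintro ⟨h1, h2⟩; exact ⟨⟨h1, hy.1⟩, by linarith⟩
      have : (fun t : ℝ => F (i.insertNth t y)) = (Set.Icc 0 (1 - ∑ j, y j)).indicator
          (fun t => MvPolynomial.eval (i.insertNth t y : Fin 3 → ℝ) (pderiv i f)) := by
        ext t
        simp only [hF, Set.indicator, hmem t]
      rw [this, integral_indicator measurableSet_Icc, integral_Icc_eq_integral_Ioc,
        ← intervalIntegral.integral_of_le (by linarith [hy.2])]
      have hc : Continuous (fun t : ℝ =>
          MvPolynomial.eval (i.insertNth t y : Fin 3 → ℝ) (pderiv i f)) := by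
        refine (MvPolynomial.continuous_eval _).comp ?_
        exact Continuous.finInsertNth (A := fun _ : Fin 3 => ℝ) i continuous_id
          (continuous_const (y := y))
      rw [intervalIntegral.integral_eq_sub_of_hasDerivAt
        (fun t _ => hasDerivAt_eval i y f t) (hc.intervalIntegrable _ _)]
      simp [hf, eval_l0, Fin.sum_univ_succAbove _ i]
    · have : (fun t : ℝ => F (i.insertNth t y)) = 0 := by
        ext t
        apply Set.indicator_of_notMem
        intro h
        rw [mem_Ktet, Fin.sum_univ_succAbove _ i, Fin.forall_iff_succAbove i] at h
        simp only [Fin.insertNth_apply_same, Fin.insertNth_apply_succAbove] at h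
        exact hy ⟨h.1.2, by linarith [h.1.1, h.2]⟩
      rw [this]; simp
  refine (integral_congr_ae (Filter.Eventually.of_forall fun y => this y)).trans (by simp)

/-- total exponent -/
def sz (a : Fin 3 →₀ ℕ) : ℕ := ∑ i, a i

/-- multi-factorial -/
def mf (a : Fin 3 →₀ ℕ) : ℝ := ∏ i, ((a i).factorial : ℝ)

lemma sz_add (a : Fin 3 →₀ ℕ) (i : Fin 3) : sz (a + Finsupp.single i 1) = sz a + 1 := by
  simp [sz, Finset.sum_add_distrib, Finsupp.single_apply]

lemma mf_add (a : Fin 3 →₀ ℕ) (i : Fin 3) :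
    mf (a + Finsupp.single i 1) = (a i + 1) * mf a := by
  simp only [mf]
  rw [← Finset.mul_prod_erase _ _ (Finset.mem_univ i),
    ← Finset.mul_prod_erase (a := i) _ (fun i => ((a i).factorial : ℝ)) (Finset.mem_univ i)]
  rw [← mul_assoc]
  congr 1
  · simp [Nat.factorial_succ]
  · apply Finset.prod_congr rfl
    intro j hj
    simp [Finsupp.single_apply, (Finset.ne_of_mem_erase hj).symm]

/-- moment functional with shift k -/
def Mom (k : ℕ) : MP →ₗ[ℝ] ℝ :=
  (MvPolynomial.basisMonomials (Fin 3) ℝ).constr ℝ (fun a => mf a / ((sz a + k).factorial : ℝ))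

lemma Mom_mono (k : ℕ) (a : Fin 3 →₀ ℕ) :
    Mom k (monomial a 1) = mf a / ((sz a + k).factorial : ℝ) := by
  have := (MvPolynomial.basisMonomials (Fin 3) ℝ).constr_basis ℝ
    (fun a => mf a / ((sz a + k).factorial : ℝ)) a
  rwa [MvPolynomial.coe_basisMonomials] at this

lemma X_mono (i : Fin 3) (a : Fin 3 →₀ ℕ) :
    (X i * monomial a 1 : MP) = monomial (a + Finsupp.single i 1) 1 := by
  rw [X, monomial_mul, add_comm]; simp

lemma pd_X_mono (i : Fin 3) (a : Fin 3 →₀ ℕ) :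
    pderiv i (X i * monomial a 1 : MP) = ((a i : ℝ) + 1) • monomial a 1 := by
  rw [X_mono, pderiv_monomial, smul_monomial]
  simp

lemma pd_l0 (i : Fin 3) : pderiv i l0 = -1 := by
  simp [l0, pderiv_X, Pi.single_apply]

lemma ext_mono {f g : MP →ₗ[ℝ] ℝ} (h : ∀ a, f (monomial a 1) = g (monomial a 1)) (q : MP) :
    f q = g q := by
  have : f = g := (MvPolynomial.basisMonomials (Fin 3) ℝ).ext (by simpa using h)
  rw [this]

lemma Mom_pd (i : Fin 3) (ψ : MP) : Mom 3 (pderiv i (X i * ψ)) = Mom 2 (X i * ψ) := by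
  refine ext_mono (f := Mom 3 ∘ₗ (pderiv i).toLinearMap ∘ₗ LinearMap.mulLeft ℝ (X i))
    (g := Mom 2 ∘ₗ LinearMap.mulLeft ℝ (X i)) ?_ ψ
  intro a
  rw [LinearMap.comp_apply, LinearMap.comp_apply, LinearMap.comp_apply, LinearMap.mulLeft_apply,
    Derivation.coeFn_coe]
  rw [pd_X_mono, X_mono, map_smul, Mom_mono, Mom_mono, mf_add, sz_add, smul_eq_mul]
  rw [mul_div_assoc, show sz a + 1 + 2 = sz a + 3 by ring]

lemma Mom_l0 (χ : MP) : Mom 2 (l0 * χ) = 0 := by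
  refine ext_mono (f := Mom 2 ∘ₗ LinearMap.mulLeft ℝ l0) (g := 0) ?_ χ
  intro a
  simp only [LinearMap.comp_apply, LinearMap.mulLeft_apply, LinearMap.zero_apply, l0, sub_mul,
    Finset.sum_mul, one_mul, X_mono, map_sub, map_sum, Mom_mono, mf_add, sz_add]
  rw [← Finset.sum_div, ← Finset.sum_mul, Finset.sum_add_distrib, ← Nat.cast_sum]
  change mf a / _ - ((sz a : ℝ) + _) * mf a / _ = 0
  rw [show sz a + 1 + 2 = (sz a + 2) + 1 by ring, Nat.factorial_succ (sz a + 2)]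
  have h1 : ((sz a + 2).factorial : ℝ) ≠ 0 := by positivity
  have h2 : (sz a : ℝ) + 2 + 1 ≠ 0 := by positivity
  generalize (sz a + 2).factorial = F at *
  push_cast
  simp only [Finset.sum_const, Finset.card_univ, Fintype.card_fin, nsmul_eq_mul, mul_one]
  push_cast
  field_simp
  ring

lemma T_mono (i : Fin 3) (a : Fin 3 →₀ ℕ) :
    pderiv i (l0 * (X i * monomial a 1) : MP) =
      ((a i : ℝ) + 1) • (monomial a 1 - ∑ j, X j * monomial a 1) - X i * monomial a 1 := by
  rw [pderiv_mul, pd_l0, pd_X_mono, l0, mul_smul_comm, sub_mul, Finset.sum_mul]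
  simp only [one_mul, neg_mul]
  abel

lemma step (W : Submodule ℝ MP) (a : Fin 3 →₀ ℕ)
    (h : ∀ i, pderiv i (l0 * (X i * monomial a 1) : MP) ∈ W) (i : Fin 3) :
    (X i * monomial a 1 : MP) - (((a i : ℝ) + 1) / (sz a + 4)) • monomial a 1 ∈ W := by
  have key := W.sub_mem (W.smul_mem (((a i : ℝ) + 1) / (sz a + 4))
    (W.sum_mem (t := Finset.univ) fun j _ => h j)) (h i)
  convert key using 1
  simp only [T_mono]
  rw [Finset.sum_sub_distrib, ← Finset.sum_smul, Finset.sum_add_distrib, ← Nat.cast_sum]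
  change _ = (_ : ℝ) • (((sz a : ℝ) + _) • _ - _) - _
  set S : MP := ∑ j, X j * monomial a 1
  set g : MP := monomial a 1
  have h2 : (sz a : ℝ) + 4 ≠ 0 := by positivity
  simp only [Finset.sum_const, Finset.card_univ, Fintype.card_fin, nsmul_eq_mul, mul_one]
  match_scalars <;> field_simp <;> ring

lemma main_red (W : Submodule ℝ MP) (N : ℕ)
    (h : ∀ a i, sz a + 2 ≤ N → pderiv i (l0 * (X i * monomial a 1) : MP) ∈ W) :
    ∀ a, sz a + 1 ≤ N → (monomial a 1 : MP) - (6 * Mom 3 (monomial a 1)) • 1 ∈ W := by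
  suffices H : ∀ n a, sz a = n → sz a + 1 ≤ N →
      (monomial a 1 : MP) - (6 * Mom 3 (monomial a 1)) • 1 ∈ W from fun a => H _ a rfl
  intro n
  induction n with
  | zero =>
    intro a ha _
    have : a = 0 := by
      ext i
      have := (Finset.sum_eq_zero_iff.1 ha) i (Finset.mem_univ i)
      simpa using this
    subst this
    rw [Mom_mono]
    have : (6 * (mf 0 / ((sz 0 + 3).factorial : ℝ))) = 1 := by
      rw [ha]; simp [mf, Nat.factorial]
    rw [this]
    simp
  | succ n ih =>
    intro a ha hN
    obtain ⟨i, hi⟩ : ∃ i, a i ≠ 0 := by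
      by_contra! hc
      simp [sz, hc] at ha
    obtain ⟨b, rfl⟩ : ∃ b, a = b + Finsupp.single i 1 := by
      refine ⟨a - Finsupp.single i 1, ?_⟩
      rw [tsub_add_cancel_of_le]
      simpa using Nat.one_le_iff_ne_zero.2 hi
    rw [sz_add] at ha hN
    have h1 := step W b (fun j => h b j (by omega)) i
    have h2 := W.smul_mem (((b i : ℝ) + 1) / (sz b + 4)) (ih b (by omega) (by omega))
    have h3 := W.add_mem h1 h2
    convert h3 using 1
    rw [X_mono, smul_sub, smul_smul, sub_add_sub_cancel]
    congr 2
    rw [Mom_mono, Mom_mono, mf_add, sz_add, show sz b + 1 + 3 = (sz b + 3) + 1 by ring,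
      Nat.factorial_succ]
    have h2 : (sz b : ℝ) + 4 ≠ 0 := by positivity
    have h3 : (sz b : ℝ) + 3 + 1 ≠ 0 := by positivity
    have h1 : ((sz b + 3).factorial : ℝ) ≠ 0 := by positivity
    push_cast
    field_simp
    ring

lemma I_eq (q : MP) : I q = 6 * Mom 3 q * I 1 := by
  refine ext_mono (f := I) (g := (6 * I 1) • Mom 3) ?_ q |>.trans ?_
  · intro a
    have := main_red (LinearMap.ker I) (sz a + 1) (fun b i _ => I_T i _) a le_rfl
    rw [LinearMap.mem_ker, map_sub, map_smul, sub_eq_zero, smul_eq_mul] at this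
    rw [this, LinearMap.smul_apply, smul_eq_mul]; ring
  · rw [LinearMap.smul_apply, smul_eq_mul]; ring

/-- The image space as a submodule. -/
def V (p : ℕ) : Submodule ℝ MP where
  carrier := {q | ∃ Φ : Fin 3 → MP, (∀ i, (Φ i).totalDegree ≤ p) ∧ normalVanish Φ ∧ q = divP Φ}
  zero_mem' := ⟨0, by simp, by intro j q _; simp, by simp [divP]⟩
  add_mem' := by
    rintro _ _ ⟨Φ, h1, h2, rfl⟩ ⟨Ψ, k1, k2, rfl⟩
    refine ⟨Φ + Ψ, fun i => (totalDegree_add _ _).trans (max_le (h1 i) (k1 i)), ?_, ?_⟩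
    · intro j q hq
      have := congrArg₂ (· + ·) (h2 j q hq) (k2 j q hq)
      simpa [add_mul, Finset.sum_add_distrib] using this
    · simp [divP, Finset.sum_add_distrib]
  smul_mem' := by
    rintro c _ ⟨Φ, h1, h2, rfl⟩
    refine ⟨c • Φ, fun i => (totalDegree_smul_le _ _).trans (h1 i), ?_, ?_⟩
    · intro j q hq
      have := congrArg (c * ·) (h2 j q hq)
      simpa [Finset.mul_sum, mul_assoc] using this
    · simp [divP, Finset.smul_sum]

lemma totalDegree_l0 : l0.totalDegree ≤ 1 := by
  rw [l0]
  refine (totalDegree_sub _ _).trans (max_le (by simp) ?_)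
  exact totalDegree_finsetSum_le fun i _ => by simp

lemma sum_eq_of_face0 {q : Fin 3 → ℝ} (h : q ∈ faceK 0) : ∑ i, q i = 1 := by
  have := h.2
  simp [lam] at this
  rw [Fin.sum_univ_three]; linarith

lemma T_mem (p : ℕ) (a : Fin 3 →₀ ℕ) (i : Fin 3) (h : sz a + 2 ≤ p) :
    pderiv i (l0 * (X i * monomial a 1) : MP) ∈ V p := by
  refine ⟨Pi.single i (l0 * (X i * monomial a 1)), ?_, ?_, ?_⟩
  · intro j
    by_cases hj : j = i
    · subst hj
      rw [Pi.single_eq_same, X_mono]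
      refine (totalDegree_mul _ _).trans ?_
      have h1 := totalDegree_l0
      have h2 : (monomial (a + Finsupp.single j 1) (1 : ℝ)).totalDegree = sz a + 1 := by
        rw [totalDegree_monomial _ one_ne_zero, ← sz_add a j, sz,
          Finsupp.sum_fintype _ _ (by simp)]
      omega
    · rw [Pi.single_eq_of_ne hj]; simp
  · intro j q hq
    rw [Finset.sum_eq_single i]
    · rw [Pi.single_eq_same]
      simp only [map_mul, eval_l0, eval_X]
      by_cases hj : j = 0
      · subst hj
        rw [sum_eq_of_face0 hq]; simp
      · have h2 := hq.2
        fin_cases j <;> fin_cases i <;> simp_all [lam, normalK]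
    · intro k _ hk
      rw [Pi.single_eq_of_ne hk]; simp
    · simp
  · rw [divP, Finset.sum_eq_single i]
    · rw [Pi.single_eq_same]
    · intro k _ hk
      rw [Pi.single_eq_of_ne hk]; simp
    · simp

lemma mem_ideal (J : Ideal MP) (σ : Fin 3 → MP) (h : ∀ i, σ i - X i ∈ J) (f : MP)
    (hf : ∀ x : Fin 3 → ℝ, (∀ i, x i ∈ Set.Icc (0 : ℝ) (1/3)) →
      MvPolynomial.eval (fun i => MvPolynomial.eval x (σ i)) f = 0) : f ∈ J := by
  have h0 : aeval σ f = 0 := by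
    refine MvPolynomial.funext_set (fun _ => Set.Icc (0 : ℝ) (1/3))
      (fun _ => Set.Icc_infinite (by norm_num)) ?_
    intro x hx
    rw [map_zero, ← hf x (fun i => hx i (Set.mem_univ i))]
    have hc : (aeval x).comp (aeval σ) =
        (aeval (fun i => MvPolynomial.eval x (σ i)) : MP →ₐ[ℝ] ℝ) := by
      ext i
      simp [MvPolynomial.aeval_eq_eval]
    have := DFunLike.congr_fun hc f
    simpa [MvPolynomial.aeval_eq_eval] using this
  have h1 : (Ideal.Quotient.mkₐ ℝ J).comp (aeval σ) = Ideal.Quotient.mkₐ ℝ J := by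
    ext i
    simp only [AlgHom.comp_apply, aeval_X]
    exact Ideal.Quotient.eq.2 (h i)
  have h2 := DFunLike.congr_fun h1 f
  rw [AlgHom.comp_apply, h0, map_zero] at h2
  exact Ideal.Quotient.eq_zero_iff_mem.1 h2.symm

lemma X_dvd (Φ : Fin 3 → MP) (h : normalVanish Φ) (i : Fin 3) : X i ∣ Φ i := by
  rw [← Ideal.mem_span_singleton]
  refine mem_ideal _ (fun j => if j = i then 0 else X j) ?_ _ ?_
  · intro j
    by_cases hj : j = i
    · subst hj
      simp only [if_true, zero_sub]
      exact neg_mem (Ideal.mem_span_singleton_self _)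
    · simp [hj]
  · intro x hx
    set y : Fin 3 → ℝ := fun j => MvPolynomial.eval x (if j = i then 0 else X j : MP) with hy
    have hy' : ∀ j, y j = if j = i then 0 else x j := by
      intro j; simp only [hy]; split_ifs <;> simp
    have hK : y ∈ Ktet := by
      rw [mem_Ktet]
      have hb : ∀ j, 0 ≤ y j ∧ y j ≤ 1/3 := by
        intro j; rw [hy' j]; split_ifs
        · norm_num
        · exact hx j
      refine ⟨fun j => (hb j).1, ?_⟩
      rw [Fin.sum_univ_three]
      linarith [(hb 0).2, (hb 1).2, (hb 2).2]
    have hyi : y i = 0 := by simp [hy']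
    have hl : lam i.succ y = 0 := by
      rw [← hyi]; fin_cases i <;> rfl
    have := h i.succ y ⟨hK, hl⟩
    clear_value y
    rw [Fin.sum_univ_three] at this
    fin_cases i <;> simpa [normalK] using this

lemma l0_dvd (Φ : Fin 3 → MP) (h : normalVanish Φ) : l0 ∣ ∑ i, Φ i := by
  rw [← Ideal.mem_span_singleton]
  refine mem_ideal _ ![1 - X 1 - X 2, X 1, X 2] ?_ _ ?_
  · intro i
    fin_cases i
    · have : (1 - X 1 - X 2 - X 0 : MP) = l0 := by
        rw [l0, Fin.sum_univ_three]; ring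
      simpa [this] using Ideal.mem_span_singleton_self l0
    · simp
    · simp
  · intro x hx
    set y : Fin 3 → ℝ := fun j => MvPolynomial.eval x ((![1 - X 1 - X 2, X 1, X 2] : Fin 3 → MP) j)
      with hy
    have y0 : y 0 = 1 - x 1 - x 2 := by simp [hy]
    have y1 : y 1 = x 1 := by simp [hy]
    have y2 : y 2 = x 2 := by simp [hy]
    clear_value y
    have hx1 := hx 1
    have hx2 := hx 2
    simp only [Set.mem_Icc] at hx1 hx2
    have hK : y ∈ Ktet := by
      rw [mem_Ktet, Fin.sum_univ_three, Fin.forall_fin_succ, Fin.forall_fin_succ,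
        Fin.forall_fin_succ]
      refine ⟨⟨?_, ?_, ?_, by simp⟩, ?_⟩
      · rw [y0]; linarith
      · change 0 ≤ y 1; rw [y1]; linarith
      · change 0 ≤ y 2; rw [y2]; linarith
      · rw [y0, y1, y2]; linarith
    have hl : lam 0 y = 0 := by
      simp [lam, y0, y1, y2]; ring
    have := h 0 y ⟨hK, hl⟩
    simp only [normalK, Matrix.cons_val_zero] at this
    rw [← Finset.sum_mul] at this
    rw [map_sum]
    have h3 : (1 / √3 : ℝ) ≠ 0 := by positivity
    exact (mul_eq_zero.1 this).resolve_right h3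

lemma Mom_div (Φ : Fin 3 → MP) (h : normalVanish Φ) : Mom 3 (divP Φ) = 0 := by
  have h1 : Mom 3 (divP Φ) = Mom 2 (∑ i, Φ i) := by
    rw [divP, map_sum, map_sum]
    refine Finset.sum_congr rfl fun i _ => ?_
    obtain ⟨ψ, hψ⟩ := X_dvd Φ h i
    rw [hψ, Mom_pd]
  obtain ⟨χ, hχ⟩ := l0_dvd Φ h
  rw [h1, hχ, Mom_l0]

lemma totalDegree_pd (i : Fin 3) (f : MP) (p : ℕ) (hf : f.totalDegree ≤ p) :
    (pderiv i f).totalDegree ≤ p - 1 := by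
  rw [totalDegree, Finset.sup_le_iff]
  intro m hm
  rw [mem_support_iff, coeff_pderiv] at hm
  have := le_totalDegree (mem_support_iff.2 (left_ne_zero_of_mul hm))
  rw [Finsupp.sum_fintype _ _ (by simp)] at this ⊢
  have h2 := sz_add m i
  simp only [sz] at h2
  omega

end TetAux

/-- div {Φ ∈ (P_p)³ : Φ·n = 0 on ∂K} = {q ∈ P_{p-1} : ∫_K q dx = 0}. -/
theorem div_interior_space_eq_mean_zero (p : ℕ) (hp : 1 ≤ p) :
    {q : MvPolynomial (Fin 3) ℝ | ∃ Φ : Fin 3 → MvPolynomial (Fin 3) ℝ,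
        (∀ i, (Φ i).totalDegree ≤ p) ∧ normalVanish Φ ∧ q = divP Φ} =
    {q : MvPolynomial (Fin 3) ℝ |
        q.totalDegree ≤ p - 1 ∧ ∫ x in Ktet, MvPolynomial.eval x q = 0} := by
  open TetAux in
  ext q
  constructor
  · rintro ⟨Φ, h1, h2, rfl⟩
    refine ⟨totalDegree_finsetSum_le fun i _ => totalDegree_pd i _ p (h1 i), ?_⟩
    rw [← I_apply, I_eq, Mom_div Φ h2]
    simp
  · rintro ⟨h1, h2⟩
    rw [← I_apply, I_eq] at h2
    have h3 : Mom 3 q = 0 := by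
      rcases mul_eq_zero.1 h2 with h | h
      · linarith
      · exact absurd h I_one
    have h4 : q - (6 * Mom 3 q) • 1 ∈ V p := by
      have hq : q = ∑ a ∈ q.support, coeff a q • (monomial a 1 : MP) := by
        conv_lhs => rw [q.as_sum]
        simp [smul_monomial]
      have : q - (6 * Mom 3 q) • 1 =
          ∑ a ∈ q.support, coeff a q • ((monomial a 1 : MP) - (6 * Mom 3 (monomial a 1)) • 1) := by
        have hM : Mom 3 q = ∑ a ∈ q.support, coeff a q * Mom 3 (monomial a 1) := by
          conv_lhs => rw [hq]
          simp only [map_sum, map_smul, smul_eq_mul]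
        simp only [smul_sub, Finset.sum_sub_distrib, ← hq, smul_smul, ← Finset.sum_smul]
        rw [hM, Finset.mul_sum]
        congr 2
        refine Finset.sum_congr rfl fun a _ => by ring
      rw [this]
      refine (V p).sum_mem fun a ha => (V p).smul_mem _ ?_
      refine main_red (V p) p (fun a i h => T_mem p a i h) a ?_
      have := le_totalDegree ha
      rw [Finsupp.sum_fintype _ _ (by simp)] at this
      simp only [sz]
      omega
    rw [h3, mul_zero, zero_smul, sub_zero] at h4
    exact h4
end
end

section
/- Let K be the reference tetrahedron in ℝ³, let p ≥ 1 be an integer, and let v ∈ P_{p−1} be a polynomial of degree at most p−1. Suppose that ∫_K v · div Φ dx = 0 for every vector polynomial Φ ∈ (P_p)³ whose normal component vanishes on each face of K. Then v is constant on K. -/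
open MeasureTheory MvPolynomial Real

noncomputable section

theorem hasDerivAt_eval_insertNth (i : Fin 3) (y : Fin 2 → ℝ) (w : MvPolynomial (Fin 3) ℝ) (t : ℝ) :
    HasDerivAt (fun s : ℝ => eval (i.insertNth s y : Fin 3 → ℝ) w)
      (eval (i.insertNth t y : Fin 3 → ℝ) (pderiv i w)) t := by
  induction w using MvPolynomial.induction_on with
  | C a => simpa using hasDerivAt_const t a
  | add f g hf hg =>
    have h := hf.add hg
    simp only [map_add]
    exact h
  | mul_X f j hf =>
    have hX : HasDerivAt (fun s : ℝ => (i.insertNth s y : Fin 3 → ℝ) j)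
        (eval (i.insertNth t y : Fin 3 → ℝ) (pderiv i (X j))) t := by
      rcases Fin.eq_self_or_eq_succAbove i j with h | ⟨k, h⟩
      · subst h
        simp only [Fin.insertNth_apply_same, pderiv_X_self, map_one]
        exact hasDerivAt_id t
      · subst h
        rw [pderiv_X_of_ne (Fin.succAbove_ne i k)]
        simpa using hasDerivAt_const t (y k)
    have h := hf.mul hX
    rw [pderiv_mul]
    simp only [map_add, map_mul, eval_X]
    exact h

theorem mem_Ktet_iff (x : Fin 3 → ℝ) : x ∈ Ktet ↔ (∀ i, 0 ≤ x i) ∧ ∑ i, x i ≤ 1 := by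
  simp only [Ktet, Set.mem_ofPred_eq, Fin.forall_fin_succ, lam, Fin.sum_univ_three]
  simp
  constructor
  · rintro ⟨a, b, c, d⟩
    refine ⟨⟨b, c, d⟩, by linarith⟩
  · rintro ⟨⟨b, c, d⟩, a⟩
    refine ⟨by linarith, b, c, d⟩

theorem isClosed_Ktet : IsClosed Ktet := by
  have : Ktet = (⋂ i : Fin 3, {x : Fin 3 → ℝ | 0 ≤ x i}) ∩ {x | ∑ i, x i ≤ 1} := by
    ext x; simp [mem_Ktet_iff]
  rw [this]
  refine IsClosed.inter (isClosed_iInter fun i => ?_) ?_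
  · exact isClosed_le continuous_const (continuous_apply i)
  · exact isClosed_le (by fun_prop) continuous_const

theorem isCompact_Ktet : IsCompact Ktet := by
  refine (isCompact_univ_pi (s := fun _ : Fin 3 => Set.Icc (0:ℝ) 1)
    (fun _ => isCompact_Icc)).of_isClosed_subset isClosed_Ktet ?_
  intro x hx i _
  rw [mem_Ktet_iff] at hx
  refine ⟨hx.1 i, le_trans ?_ hx.2⟩
  exact Finset.single_le_sum (fun j _ => hx.1 j) (Finset.mem_univ i)

theorem continuous_evalP (w : MvPolynomial (Fin 3) ℝ) : Continuous fun x => eval x w :=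
  MvPolynomial.continuous_eval w

theorem integrableOn_evalP (w : MvPolynomial (Fin 3) ℝ) :
    IntegrableOn (fun x => eval x w) Ktet :=
  (continuous_evalP w).continuousOn.integrableOn_compact isCompact_Ktet

theorem integral_pderiv_eq_zero (i : Fin 3) (w : MvPolynomial (Fin 3) ℝ)
    (h0 : ∀ x : Fin 3 → ℝ, x i = 0 → eval x w = 0)
    (h1 : ∀ x : Fin 3 → ℝ, ∑ j, x j = 1 → eval x w = 0) :
    ∫ x in Ktet, eval x (pderiv i w) = 0 := by
  have hmp := (volume_preserving_piFinSuccAbove (fun _ : Fin 3 => ℝ) i).symm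
  have hint : Integrable (Ktet.indicator fun x => eval x (pderiv i w)) :=
    (integrableOn_evalP _).integrable_indicator isClosed_Ktet.measurableSet
  rw [← integral_indicator isClosed_Ktet.measurableSet,
    ← hmp.integral_comp (MeasurableEquiv.measurableEmbedding _)]
  have hint2 := (hmp.integrable_comp_emb (MeasurableEquiv.measurableEmbedding _)).2 hint
  rw [Measure.volume_eq_prod] at hint2 ⊢
  refine (integral_prod_symm _ hint2).trans ?_
  refine integral_eq_zero_of_ae (Filter.Eventually.of_forall fun y => ?_)
  change ∫ t : ℝ, Ktet.indicator (fun x => eval x (pderiv i w)) (i.insertNth t y : Fin 3 → ℝ) = 0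
  have hmem : ∀ t : ℝ, (i.insertNth t y : Fin 3 → ℝ) ∈ Ktet ↔
      (0 ≤ t ∧ ∀ k, 0 ≤ y k) ∧ t + ∑ k, y k ≤ 1 := by
    intro t
    rw [mem_Ktet_iff, Fin.forall_iff_succAbove i, Fin.sum_univ_succAbove _ i]
    simp
  by_cases hy : (∀ k, 0 ≤ y k) ∧ ∑ k, y k ≤ 1
  · have : (fun t : ℝ => Ktet.indicator (fun x => eval x (pderiv i w))
        (i.insertNth t y : Fin 3 → ℝ)) =
        (Set.Icc 0 (1 - ∑ k, y k)).indicator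
          (fun t => eval (i.insertNth t y : Fin 3 → ℝ) (pderiv i w)) := by
      funext t
      have hiff : (i.insertNth t y : Fin 3 → ℝ) ∈ Ktet ↔ t ∈ Set.Icc 0 (1 - ∑ k, y k) := by
        rw [hmem, Set.mem_Icc]
        constructor
        · rintro ⟨⟨a, _⟩, b⟩
          exact ⟨a, by linarith⟩
        · rintro ⟨a, b⟩
          exact ⟨⟨a, hy.1⟩, by linarith⟩
      by_cases ht : t ∈ Set.Icc 0 (1 - ∑ k, y k)
      · rw [Set.indicator_of_mem ht, Set.indicator_of_mem (hiff.2 ht)]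
      · rw [Set.indicator_of_notMem ht, Set.indicator_of_notMem (fun h => ht (hiff.1 h))]
    rw [this, integral_indicator measurableSet_Icc, integral_Icc_eq_integral_Ioc,
      ← intervalIntegral.integral_of_le (by linarith [hy.2])]
    rw [intervalIntegral.integral_eq_sub_of_hasDerivAt
      (fun t _ => hasDerivAt_eval_insertNth i y w t)]
    · rw [h0 (i.insertNth 0 y) (by simp), h1 (i.insertNth (1 - ∑ k, y k) y), sub_zero]
      rw [Fin.sum_univ_succAbove _ i]
      simp
    · refine Continuous.intervalIntegrable ?_ _ _
      exact continuous_iff_continuousAt.2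
        fun t => (hasDerivAt_eval_insertNth i y (pderiv i w) t).continuousAt
  · have : (fun t : ℝ => Ktet.indicator (fun x => eval x (pderiv i w))
        (i.insertNth t y : Fin 3 → ℝ)) = fun _ => 0 := by
      funext t
      refine Set.indicator_of_notMem (fun h => hy ?_) _
      rw [hmem] at h
      exact ⟨h.1.2, by linarith [h.1.1, h.2]⟩
    rw [this]
    simp

theorem pderiv_degree (i : Fin 3) (v : MvPolynomial (Fin 3) ℝ) :
    pderiv i v = 0 ∨ (pderiv i v).totalDegree + 1 ≤ v.totalDegree := by
  by_cases h : pderiv i v = 0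
  · exact Or.inl h
  right
  have key : ∀ m ∈ (pderiv i v).support, (m.sum fun _ e => e) + 1 ≤ v.totalDegree := by
    intro m hm
    rw [mem_support_iff, coeff_pderiv] at hm
    have hm' : m + Finsupp.single i 1 ∈ v.support := by
      rw [mem_support_iff]
      intro h0
      exact hm (by simp [h0])
    have := le_totalDegree hm'
    rwa [Finsupp.sum_add_index' (by simp) (by simp), Finsupp.sum_single_index rfl] at this
  obtain ⟨m, hm⟩ := support_nonempty.2 h
  have h1 := key m hm
  have : (pderiv i v).totalDegree ≤ v.totalDegree - 1 := by
    refine Finset.sup_le fun m hm => ?_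
    have := key m hm
    omega
  omega

/-- The edge bubble. -/
def bub (i : Fin 3) : MvPolynomial (Fin 3) ℝ := X i * (1 - ∑ j, X j)

theorem bub_degree (i : Fin 3) : (bub i).totalDegree ≤ 2 := by
  have h1 : (1 - ∑ j, X j : MvPolynomial (Fin 3) ℝ).totalDegree ≤ 1 := by
    refine (totalDegree_sub _ _).trans (max_le (by simp) ?_)
    exact totalDegree_finsetSum_le fun j _ => by simp
  refine (totalDegree_mul _ _).trans ?_
  rw [totalDegree_X]
  omega

theorem eval_bub (i : Fin 3) (x : Fin 3 → ℝ) : eval x (bub i) = x i * (1 - ∑ j, x j) := by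
  simp [bub]

theorem pderiv_zero_of_orth (p : ℕ)
    (v : MvPolynomial (Fin 3) ℝ) (hv : v.totalDegree ≤ p - 1)
    (horth : ∀ Φ : Fin 3 → MvPolynomial (Fin 3) ℝ,
      (∀ i, (Φ i).totalDegree ≤ p) → normalVanish Φ →
      ∫ x in Ktet, MvPolynomial.eval x v * MvPolynomial.eval x (divP Φ) = 0) (i : Fin 3) :
    pderiv i v = 0 := by
  set g := pderiv i v with hg
  have hdeg : (bub i * g).totalDegree ≤ p := by
    rcases pderiv_degree i v with h | h
    · rw [hg, h]; simp
    · rw [← hg] at h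
      have := totalDegree_mul (bub i) g
      have := bub_degree i
      omega
  have hdiv : divP (Pi.single i (bub i * g)) = pderiv i (bub i * g) := by
    rw [divP, Finset.sum_eq_single i]
    · simp
    · intro j _ hj; simp [hj]
    · simp
  have h := horth (Pi.single i (bub i * g)) ?_ ?_
  · rw [hdiv] at h
    have h2 := integral_pderiv_eq_zero i (v * (bub i * g)) ?_ ?_
    · have hsplit : ∀ x : Fin 3 → ℝ, eval x (pderiv i (v * (bub i * g))) =
          eval x v * eval x (pderiv i (bub i * g)) + eval x (bub i * g * g) := by
        intro x
        rw [pderiv_mul, ← hg]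
        simp only [map_add, map_mul]
        ring
      simp_rw [hsplit] at h2
      rw [integral_add, h, zero_add] at h2
      · have hnn : ∀ x ∈ Ktet, 0 ≤ eval x (bub i * g * g) := by
          intro x hx
          rw [mem_Ktet_iff] at hx
          rw [map_mul, map_mul, eval_bub, mul_assoc]
          exact mul_nonneg (mul_nonneg (hx.1 i) (by linarith [hx.2])) (mul_self_nonneg _)
        rw [setIntegral_eq_zero_iff_of_nonneg_ae
          (ae_restrict_of_forall_mem isClosed_Ktet.measurableSet hnn) (integrableOn_evalP _)] at h2
        have hU : IsOpen (Set.univ.pi fun _ : Fin 3 => Set.Ioo (0:ℝ) (1/3)) :=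
          isOpen_set_pi Set.finite_univ fun _ _ => isOpen_Ioo
        have hlt : ∀ x ∈ (Set.univ.pi fun _ : Fin 3 => Set.Ioo (0:ℝ) (1/3)),
            ∑ j, x j < 1 := by
          intro x hx
          have h0 := (hx 0 trivial).2
          have h1 := (hx 1 trivial).2
          have h2 := (hx 2 trivial).2
          rw [Fin.sum_univ_three]
          linarith
        have hsub : (Set.univ.pi fun _ : Fin 3 => Set.Ioo (0:ℝ) (1/3)) ⊆ Ktet := by
          intro x hx
          rw [mem_Ktet_iff]
          exact ⟨fun j => (hx j trivial).1.le, (hlt x hx).le⟩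
        have h3 := ae_restrict_of_ae_restrict_of_subset hsub h2
        have h4 := Measure.eqOn_open_of_ae_eq h3 hU (continuous_evalP _).continuousOn
          continuous_const.continuousOn
        refine funext_set (fun _ : Fin 3 => Set.Ioo (0:ℝ) (1/3))
          (fun _ => Set.Ioo_infinite (by norm_num)) fun x hx => ?_
        have h5 : eval x (bub i * g * g) = 0 := h4 hx
        rw [map_mul, map_mul, eval_bub] at h5
        have ha : x i ≠ 0 := (hx i trivial).1.ne'
        have hb : 1 - ∑ j, x j ≠ 0 := (sub_pos.2 (hlt x hx)).ne'
        rw [map_zero]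
        simpa [ha, hb] using h5
      · have := integrableOn_evalP (v * pderiv i (bub i * g))
        simp only [map_mul] at this
        exact this
      · exact integrableOn_evalP _
    · intro x hx
      simp [eval_bub, hx]
    · intro x hx
      simp [eval_bub, hx]
  · intro j
    by_cases hj : j = i
    · subst hj; simpa using hdeg
    · simp [hj]
  · intro j q hq
    rw [Finset.sum_eq_single i]
    · rw [Pi.single_eq_same, map_mul, eval_bub, Fin.sum_univ_three]
      have hq2 := hq.2
      fin_cases j
      · have : 1 - (q 0 + q 1 + q 2) = 0 := by
          simp [lam] at hq2; linarith
        rw [this]; simp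
      all_goals
        simp [lam] at hq2
        fin_cases i <;> simp [normalK, hq2]
    · intro k _ hk; simp [hk]
    · simp

/-- if v ∈ P_{p-1} is L²(K)-orthogonal to div Φ for every Φ ∈ (P_p)³ with
vanishing normal component on ∂K, then v is constant on K. -/
theorem constant_of_orthogonal_to_div (p : ℕ) (hp : 1 ≤ p)
    (v : MvPolynomial (Fin 3) ℝ) (hv : v.totalDegree ≤ p - 1)
    (horth : ∀ Φ : Fin 3 → MvPolynomial (Fin 3) ℝ,
      (∀ i, (Φ i).totalDegree ≤ p) → normalVanish Φ →
      ∫ x in Ktet, MvPolynomial.eval x v * MvPolynomial.eval x (divP Φ) = 0) :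
    ∃ c : ℝ, ∀ x ∈ Ktet, MvPolynomial.eval x v = c := by
  have h0 := pderiv_zero_of_orth p v hv horth
  have hC : v = C (coeff 0 v) := by
    ext m
    rw [coeff_C]
    split_ifs with hm
    · rw [← hm]
    · obtain ⟨i, hi⟩ : ∃ i, m i ≠ 0 := by
        by_contra hcon
        push Not at hcon
        exact hm (Finsupp.ext fun i => (hcon i).symm)
      have h := coeff_pderiv (i := i) v (m - Finsupp.single i 1)
      have hle : Finsupp.single i 1 ≤ m := by
        rw [Finsupp.single_le_iff]
        omega
      rw [h0 i, coeff_zero, tsub_add_cancel_of_le hle] at h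
      rcases mul_eq_zero.1 h.symm with h | h
      · exact h
      · exfalso
        have : (0:ℝ) ≤ (((m - Finsupp.single i 1 : Fin 3 →₀ ℕ) i : ℕ) : ℝ) := Nat.cast_nonneg _
        linarith
  refine ⟨coeff 0 v, fun x _ => ?_⟩
  rw [hC]
  simp
end
end

section
/- Let K be the reference tetrahedron in ℝ³ and let p ≥ 1 be an integer. Let Σ = {Φ ∈ (P_p)³ : Φ·n = 0 on ∂K} and let D = {div Φ : Φ ∈ Σ}. Then every polynomial q ∈ P_{p−1} admits a unique decomposition q = c + r with c a constant and r ∈ D; moreover ∫_K r dx = 0, so that the decomposition P_{p−1} = ℝ·1 ⊕ D is orthogonal in L²(K). -/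
open MeasureTheory MvPolynomial Real

noncomputable section

/-! ### The factorial functional -/

/-- The functional sending `x^s` to `∏ (s i)! / (|s| + k)!`. -/
def factT (k : ℕ) : MvPolynomial (Fin 3) ℝ →ₗ[ℝ] ℝ :=
  (MvPolynomial.basisMonomials (Fin 3) ℝ).constr ℝ
    (fun s => ((s 0).factorial * (s 1).factorial * (s 2).factorial : ℝ) /
      ((s 0 + s 1 + s 2 + k).factorial : ℝ))

lemma factT_monomial (k : ℕ) (s : Fin 3 →₀ ℕ) (a : ℝ) :
    factT k (monomial s a) = a * (((s 0).factorial * (s 1).factorial * (s 2).factorial : ℝ) /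
      ((s 0 + s 1 + s 2 + k).factorial : ℝ)) := by
  have h : (monomial s a : MvPolynomial (Fin 3) ℝ) =
      a • (MvPolynomial.basisMonomials (Fin 3) ℝ) s := by
    simp [MvPolynomial.coe_basisMonomials, MvPolynomial.smul_monomial]
  rw [h, map_smul, factT, Module.Basis.constr_basis, smul_eq_mul]

lemma factT_pderiv (i : Fin 3) (f : MvPolynomial (Fin 3) ℝ) :
    factT 3 (pderiv i (X i * f)) = factT 2 (X i * f) := by
  induction f using MvPolynomial.induction_on' with
  | add p q hp hq => simp only [mul_add, map_add, hp, hq]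
  | monomial s a =>
    have h : (X i * monomial s a : MvPolynomial (Fin 3) ℝ) = monomial (Finsupp.single i 1 + s) a := by
      rw [X, monomial_mul, one_mul]
    rw [h, pderiv_monomial, factT_monomial, factT_monomial]
    fin_cases i <;> simp
    · rw [show 1 + s 0 + s 1 + s 2 + 2 = s 0 + s 1 + s 2 + 3 by ring, add_comm 1 (s 0),
        Nat.factorial_succ (s 0)]
      push_cast; ring
    · rw [show s 0 + (1 + s 1) + s 2 + 2 = s 0 + s 1 + s 2 + 3 by ring, add_comm 1 (s 1),
        Nat.factorial_succ (s 1)]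
      push_cast; ring
    · rw [show s 0 + s 1 + (1 + s 2) + 2 = s 0 + s 1 + s 2 + 3 by ring, add_comm 1 (s 2),
        Nat.factorial_succ (s 2)]
      push_cast; ring

lemma factT_surface (f : MvPolynomial (Fin 3) ℝ) :
    factT 2 ((X 0 - (1 - X 1 - X 2)) * f) = 0 := by
  induction f using MvPolynomial.induction_on' with
  | add p q hp hq => simp only [mul_add, map_add, hp, hq, add_zero]
  | monomial s a =>
    have h (i : Fin 3) : (X i * monomial s a : MvPolynomial (Fin 3) ℝ) =
        monomial (Finsupp.single i 1 + s) a := by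
      rw [X, monomial_mul, one_mul]
    have e : (X 0 - (1 - X 1 - X 2)) * (monomial s a : MvPolynomial (Fin 3) ℝ) =
        X 0 * monomial s a + X 1 * monomial s a + X 2 * monomial s a - monomial s a := by ring
    rw [e, h, h, h]
    simp only [map_add, map_sub, factT_monomial]
    simp
    rw [show 1 + s 0 + s 1 + s 2 + 2 = (s 0 + s 1 + s 2 + 2) + 1 by ring,
      show s 0 + (1 + s 1) + s 2 + 2 = (s 0 + s 1 + s 2 + 2) + 1 by ring,
      show s 0 + s 1 + (1 + s 2) + 2 = (s 0 + s 1 + s 2 + 2) + 1 by ring,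
      add_comm 1 (s 0), add_comm 1 (s 1), add_comm 1 (s 2)]
    simp only [Nat.factorial_succ (s 0), Nat.factorial_succ (s 1), Nat.factorial_succ (s 2),
      Nat.factorial_succ (s 0 + s 1 + s 2 + 2)]
    have := Nat.cast_ne_zero (R := ℝ) |>.2 (Nat.factorial_ne_zero (s 0 + s 1 + s 2 + 2))
    push_cast
    field_simp
    ring

/-! ### Divisibility from vanishing on faces -/

lemma dvd_sub_subst (d : MvPolynomial (Fin 3) ℝ) (g : Fin 3 → MvPolynomial (Fin 3) ℝ)
    (h : ∀ j, d ∣ X j - g j) (p : MvPolynomial (Fin 3) ℝ) : d ∣ p - aeval g p := by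
  have e : (Ideal.Quotient.mkₐ ℝ (Ideal.span {d})).comp (aeval g) =
      Ideal.Quotient.mkₐ ℝ (Ideal.span {d}) := by
    apply MvPolynomial.algHom_ext
    intro j
    simp only [AlgHom.comp_apply, aeval_X, Ideal.Quotient.mkₐ_eq_mk]
    rw [eq_comm, Ideal.Quotient.eq, Ideal.mem_span_singleton]
    exact h j
  have := DFunLike.congr_fun e p
  simp only [AlgHom.comp_apply, Ideal.Quotient.mkₐ_eq_mk] at this
  rw [eq_comm, Ideal.Quotient.eq, Ideal.mem_span_singleton] at this
  exact this

lemma dvd_of_vanish (d : MvPolynomial (Fin 3) ℝ) (g : Fin 3 → MvPolynomial (Fin 3) ℝ)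
    (h : ∀ j, d ∣ X j - g j) (p : MvPolynomial (Fin 3) ℝ)
    (hv : ∀ x : Fin 3 → ℝ, (∀ j, x j ∈ Set.Icc (0:ℝ) (1/3)) →
      eval (fun j => eval x (g j)) p = 0) : d ∣ p := by
  have hz : aeval g p = 0 := by
    apply MvPolynomial.funext_set (fun _ : Fin 3 => Set.Icc (0:ℝ) (1/3))
    · intro j; exact Set.Icc_infinite (by norm_num)
    · intro x hx
      have := hv x (fun j => hx j (Set.mem_univ j))
      rw [map_zero, ← this, ← MvPolynomial.coe_aeval_eq_eval, ← MvPolynomial.coe_aeval_eq_eval]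
      simp only [RingHom.coe_coe]
      rw [← AlgHom.comp_apply, MvPolynomial.comp_aeval]
  have := dvd_sub_subst d g h p
  rwa [hz, sub_zero] at this

lemma factT_div (Φ : Fin 3 → MvPolynomial (Fin 3) ℝ) (h : normalVanish Φ) :
    factT 3 (divP Φ) = 0 := by
  have h0 : (X 0 - (1 - X 1 - X 2) : MvPolynomial (Fin 3) ℝ) ∣ Φ 0 + Φ 1 + Φ 2 := by
    apply dvd_of_vanish _ ![1 - X 1 - X 2, X 1, X 2]
    · intro j; fin_cases j <;> simp
    · intro x hx
      have h0 := hx 0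
      have h1 := hx 1
      have h2 := hx 2
      simp only [Set.mem_Icc] at h0 h1 h2
      have := h 0 (fun j => eval x ((![1 - X 1 - X 2, X 1, X 2] :
        Fin 3 → MvPolynomial (Fin 3) ℝ) j)) ?_
      · simp only [normalK, Fin.sum_univ_three, Matrix.cons_val_zero, ← add_mul] at this
        rcases mul_eq_zero.1 this with h' | h'
        · simpa using h'
        · exfalso; revert h'; simp
      · refine ⟨?_, ?_⟩
        · intro j; fin_cases j <;> simp [lam] <;> linarith
        · simp [lam]; ring
  have hi : ∀ i : Fin 3, (X i : MvPolynomial (Fin 3) ℝ) ∣ Φ i := by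
    intro i
    apply dvd_of_vanish _ (fun j => if j = i then 0 else X j)
    · intro j; by_cases hj : j = i <;> simp [hj]
    · intro x hx
      have h0 := hx 0
      have h1 := hx 1
      have h2 := hx 2
      simp only [Set.mem_Icc] at h0 h1 h2
      have := h i.succ (fun j => eval x ((if j = i then 0 else X j :
        MvPolynomial (Fin 3) ℝ))) ?_
      · fin_cases i <;> simpa [normalK, Fin.sum_univ_three] using this
      · refine ⟨?_, ?_⟩
        · intro j; fin_cases i <;> fin_cases j <;> simp [lam] <;> linarith
        · fin_cases i <;> simp [lam]
  have key : ∀ i, factT 3 (pderiv i (Φ i)) = factT 2 (Φ i) := by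
    intro i
    obtain ⟨f, hf⟩ := hi i
    rw [hf, factT_pderiv]
  obtain ⟨g, hg⟩ := h0
  rw [divP, Fin.sum_univ_three, map_add, map_add, key, key, key, ← map_add, ← map_add, hg,
    factT_surface]

/-! ### Every polynomial of degree `≤ p-1` is a constant plus a divergence -/

/-- `ℝ·1 + D` as a submodule. -/
def Wsub (p : ℕ) : Submodule ℝ (MvPolynomial (Fin 3) ℝ) where
  carrier := {q | ∃ c : ℝ, ∃ Φ : Fin 3 → MvPolynomial (Fin 3) ℝ,
    (∀ i, (Φ i).totalDegree ≤ p) ∧ normalVanish Φ ∧ q = C c + divP Φ}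
  zero_mem' := ⟨0, 0, by simp, by intro j q _; simp, by simp [divP]⟩
  add_mem' := by
    rintro a b ⟨c, Φ, h1, h2, rfl⟩ ⟨c', Φ', h1', h2', rfl⟩
    refine ⟨c + c', Φ + Φ', fun i => (totalDegree_add _ _).trans (max_le (h1 i) (h1' i)), ?_, ?_⟩
    · intro j q hq
      have := h2 j q hq
      have := h2' j q hq
      simp only [Pi.add_apply, map_add, add_mul, Finset.sum_add_distrib, *, add_zero]
    · simp only [divP, Pi.add_apply, map_add, Finset.sum_add_distrib]; ring
  smul_mem' := by
    rintro t a ⟨c, Φ, h1, h2, rfl⟩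
    refine ⟨t * c, t • Φ, fun i => (totalDegree_smul_le _ _).trans (h1 i), ?_, ?_⟩
    · intro j q hq
      have := h2 j q hq
      simp only [Pi.smul_apply, smul_eval, mul_assoc, ← Finset.mul_sum, this, mul_zero]
    · simp only [divP, Pi.smul_apply, Derivation.map_smul, smul_add, ← Finset.smul_sum, map_mul]
      rw [smul_eq_C_mul (C c)]

lemma divP_mem_W (p : ℕ) (Φ : Fin 3 → MvPolynomial (Fin 3) ℝ)
    (h1 : ∀ i, (Φ i).totalDegree ≤ p) (h2 : normalVanish Φ) : divP Φ ∈ Wsub p :=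
  ⟨0, Φ, h1, h2, by simp⟩

lemma deg_mon (a b c : ℕ) :
    (X 0 ^ a * X 1 ^ b * X 2 ^ c : MvPolynomial (Fin 3) ℝ).totalDegree ≤ a + b + c := by
  refine (totalDegree_mul _ _).trans (add_le_add ((totalDegree_mul _ _).trans ?_) ?_)
  · exact add_le_add (by simp) (by simp)
  · simp

lemma field_y (p a b c : ℕ) (h : a + b + c + 2 ≤ p) :
    ((b + 1 : ℝ) • (X 0 ^ (a+1) * X 1 ^ b * X 2 ^ c) -
      (a + 1 : ℝ) • (X 0 ^ a * X 1 ^ (b+1) * X 2 ^ c) : MvPolynomial (Fin 3) ℝ) ∈ Wsub p := by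
  have hd := deg_mon (a+1) (b+1) c
  have := divP_mem_W p ![-(X 0 ^ (a+1) * X 1 ^ (b+1) * X 2 ^ c), X 0 ^ (a+1) * X 1 ^ (b+1) * X 2 ^ c, 0]
    (by intro i; fin_cases i <;> simp <;> omega) ?_
  · convert this using 1
    simp [divP, Fin.sum_univ_three, pderiv_X, smul_eq_C_mul]
    ring
  · rintro j q ⟨-, hq⟩
    fin_cases j <;> simp [lam, normalK, Fin.sum_univ_three] at hq ⊢ <;> simp [hq]

lemma field_z (p a b c : ℕ) (h : a + b + c + 2 ≤ p) :
    ((c + 1 : ℝ) • (X 0 ^ (a+1) * X 1 ^ b * X 2 ^ c) -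
      (a + 1 : ℝ) • (X 0 ^ a * X 1 ^ b * X 2 ^ (c+1)) : MvPolynomial (Fin 3) ℝ) ∈ Wsub p := by
  have hd := deg_mon (a+1) b (c+1)
  have := divP_mem_W p ![-(X 0 ^ (a+1) * X 1 ^ b * X 2 ^ (c+1)), 0, X 0 ^ (a+1) * X 1 ^ b * X 2 ^ (c+1)]
    (by intro i; fin_cases i <;> simp <;> omega) ?_
  · convert this using 1
    simp [divP, Fin.sum_univ_three, pderiv_X, smul_eq_C_mul]
    ring
  · rintro j q ⟨-, hq⟩
    fin_cases j <;> simp [lam, normalK, Fin.sum_univ_three] at hq ⊢ <;> simp [hq]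

lemma field_x (p n : ℕ) (h : n + 2 ≤ p) :
    ((n + 1 : ℝ) • X 0 ^ n - (n + 4 : ℝ) • X 0 ^ (n+1) : MvPolynomial (Fin 3) ℝ) ∈ Wsub p := by
  have h0 := deg_mon (n+1) 0 0
  have h00 := deg_mon (n+2) 0 0
  have h1 := deg_mon (n+1) 1 0
  have h2 := deg_mon (n+1) 0 1
  simp only [pow_zero, mul_one, pow_one] at h0 h00 h1 h2
  have h3 := totalDegree_sub (X 0 ^ (n+1)) (X 0 ^ (n+2) : MvPolynomial (Fin 3) ℝ)
  have h4 := h3.trans (max_le (h0.trans (by omega)) h00)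
  have := divP_mem_W p ![X 0 ^ (n+1) - X 0 ^ (n+2), -(X 0 ^ (n+1) * X 1), -(X 0 ^ (n+1) * X 2)]
    (by
      intro i; fin_cases i
      · exact h4.trans (by omega)
      · simp only [Fin.mk_one, Matrix.cons_val_one, Matrix.cons_val_zero, totalDegree_neg]; omega
      · change (-(X 0 ^ (n+1) * X 2) : MvPolynomial (Fin 3) ℝ).totalDegree ≤ p
        rw [totalDegree_neg]; omega) ?_
  · convert this using 1
    simp [divP, Fin.sum_univ_three, pderiv_X, smul_eq_C_mul]
    have : (C (4:ℝ) : MvPolynomial (Fin 3) ℝ) = 4 := map_ofNat C 4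
    rw [this]
    ring
  · rintro j q ⟨-, hq⟩
    fin_cases j <;> simp [lam, normalK, Fin.sum_univ_three] at hq ⊢
    · have hq' : q 0 = 1 - q 1 - q 2 := by linarith
      rw [hq']; ring
    · simp [hq]
    · simp [hq]
    · simp [hq]

lemma mem_of_sub {W : Submodule ℝ (MvPolynomial (Fin 3) ℝ)} {u v : MvPolynomial (Fin 3) ℝ}
    {s t : ℝ} (ht : t ≠ 0) (hu : u ∈ W) (h : s • u - t • v ∈ W) : v ∈ W := by
  have := W.smul_mem t⁻¹ (W.sub_mem (W.smul_mem s hu) h)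
  rwa [sub_sub_cancel, smul_smul, inv_mul_cancel₀ ht, one_smul] at this

lemma pow_mem_W (p n : ℕ) (h : n + 1 ≤ p) : (X 0 ^ n : MvPolynomial (Fin 3) ℝ) ∈ Wsub p := by
  induction n with
  | zero => exact ⟨1, 0, by simp, by intro j q _; simp, by simp [divP]⟩
  | succ n ih => exact mem_of_sub (by positivity) (ih (by omega)) (field_x p n h)

lemma pow2_mem_W (p b : ℕ) : ∀ a, a + b + 1 ≤ p →
    (X 0 ^ a * X 1 ^ b * X 2 ^ 0 : MvPolynomial (Fin 3) ℝ) ∈ Wsub p := by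
  induction b with
  | zero => intro a h; simpa using pow_mem_W p a h
  | succ b ih =>
    intro a h
    exact mem_of_sub (by positivity) (ih (a+1) (by omega)) (field_y p a b 0 (by omega))

lemma pow3_mem_W (p b c : ℕ) : ∀ a, a + b + c + 1 ≤ p →
    (X 0 ^ a * X 1 ^ b * X 2 ^ c : MvPolynomial (Fin 3) ℝ) ∈ Wsub p := by
  induction c with
  | zero => intro a h; exact pow2_mem_W p b a h
  | succ c ih =>
    intro a h
    exact mem_of_sub (by positivity) (ih (a+1) (by omega)) (field_z p a b c (by omega))

lemma mem_W (p : ℕ) (hp : 1 ≤ p) (q : MvPolynomial (Fin 3) ℝ) (hq : q.totalDegree ≤ p - 1) :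
    q ∈ Wsub p := by
  rw [q.as_sum]
  refine Submodule.sum_mem _ fun s hs => ?_
  have h1 := le_totalDegree hs
  rw [Finsupp.sum_fintype _ _ (fun _ => rfl), Fin.sum_univ_three] at h1
  have h2 := pow3_mem_W p (s 1) (s 2) (s 0) (by omega)
  rw [monomial_eq, Finsupp.prod_fintype _ _ (fun _ => pow_zero _), Fin.prod_univ_three,
    ← smul_eq_C_mul]
  exact Submodule.smul_mem _ _ h2

/-! ### Dirichlet integrals over simplices -/

lemma beta_nat (a : ℕ) : ∀ (N : ℕ) (s : ℝ),
    ∫ t in (0:ℝ)..s, t ^ a * (s - t) ^ N =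
      (a.factorial * N.factorial : ℝ) / ((a + N + 1).factorial : ℝ) * s ^ (a + N + 1) := by
  induction a with
  | zero =>
    intro N s
    simp only [pow_zero, one_mul]
    rw [intervalIntegral.integral_comp_sub_left (fun t => t ^ N) s]
    simp only [sub_self, sub_zero, integral_pow, zero_add, Nat.factorial_zero]
    rw [Nat.factorial_succ]
    have := Nat.cast_ne_zero (R := ℝ) |>.2 (Nat.factorial_ne_zero N)
    push_cast
    field_simp
    simp
  | succ a ih =>
    intro N s
    have hN : (N + 1 : ℝ) ≠ 0 := by positivity
    have hparts := intervalIntegral.integral_mul_deriv_eq_deriv_mul (a := 0) (b := s)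
      (u := fun t : ℝ => t ^ (a + 1)) (u' := fun t => (a + 1 : ℝ) * t ^ a)
      (v := fun t => -((s - t) ^ (N + 1) / (N + 1 : ℝ))) (v' := fun t => (s - t) ^ N)
      (fun t _ => by simpa using hasDerivAt_pow (a + 1) t)
      (fun t _ => by
        have h := ((((hasDerivAt_id t).const_sub s).pow (N + 1)).div_const (N + 1 : ℝ)).neg
        refine HasDerivAt.congr_deriv (f := fun t => -((s - t) ^ (N + 1) / (N + 1 : ℝ))) h ?_
        simp only [id, Nat.add_sub_cancel]
        push_cast
        field_simp)
      (Continuous.intervalIntegrable (by fun_prop) _ _)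
      (Continuous.intervalIntegrable (by fun_prop) _ _)
    rw [hparts]
    have e : (fun t : ℝ => (a + 1 : ℝ) * t ^ a * -((s - t) ^ (N + 1) / (N + 1 : ℝ))) =
        fun t => (-((a + 1 : ℝ) / (N + 1))) * (t ^ a * (s - t) ^ (N + 1)) := by
      funext t; field_simp
    rw [e, intervalIntegral.integral_const_mul, ih (N + 1) s]
    rw [show a + (N + 1) + 1 = a + 1 + N + 1 by ring, Nat.factorial_succ a, Nat.factorial_succ N]
    have := Nat.cast_ne_zero (R := ℝ) |>.2 (Nat.factorial_ne_zero (a + 1 + N + 1))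
    simp
    field_simp

/-- The corner simplex of size `s`. -/
def simp0 (n : ℕ) (s : ℝ) : Set (Fin n → ℝ) := {x | (∀ i, 0 ≤ x i) ∧ ∑ i, x i ≤ s}

lemma simp0_closed (n : ℕ) (s : ℝ) : IsClosed (simp0 n s) := by
  have e : simp0 n s = (⋂ i, {x : Fin n → ℝ | 0 ≤ x i}) ∩ {x | ∑ i, x i ≤ s} := by
    ext x; simp [simp0]
  rw [e]
  apply IsClosed.inter
  · exact isClosed_iInter fun i => isClosed_le continuous_const (continuous_apply i)
  · exact isClosed_le (by fun_prop) continuous_const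

lemma simp0_compact (n : ℕ) (s : ℝ) : IsCompact (simp0 n s) := by
  refine IsCompact.of_isClosed_subset (isCompact_univ_pi (s := fun _ : Fin n => Set.Icc (0:ℝ) s)
    fun i => isCompact_Icc) (simp0_closed n s) ?_
  rintro x ⟨h1, h2⟩ i -
  exact ⟨h1 i, (Finset.single_le_sum (fun j _ => h1 j) (Finset.mem_univ i)).trans h2⟩

lemma dirichlet (n : ℕ) : ∀ (a : Fin n → ℕ) (s : ℝ), 0 ≤ s →
    ∫ x in simp0 n s, ∏ i, x i ^ a i =
      (∏ i, ((a i).factorial : ℝ)) / ((∑ i, a i + n).factorial : ℝ) * s ^ (∑ i, a i + n) := by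
  induction n with
  | zero =>
    intro a s hs
    have : simp0 0 s = Set.univ := by
      ext x; simp [simp0, hs]
    rw [this]
    simp [MeasureTheory.Measure.volume_pi_eq_dirac 0]
  | succ n ih =>
    intro a s hs
    have hmp := (volume_preserving_piFinSuccAbove (fun _ : Fin (n+1) => ℝ) 0).symm
    have hint : IntegrableOn (fun x : Fin (n+1) → ℝ => ∏ i, x i ^ a i) (simp0 (n+1) s) :=
      ContinuousOn.integrableOn_compact (simp0_compact _ _)
        (Continuous.continuousOn (by fun_prop))
    rw [← integrable_indicator_iff (simp0_closed _ _).measurableSet] at hint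
    rw [← integral_indicator (simp0_closed _ _).measurableSet]
    rw [← hmp.integral_comp (MeasurableEquiv.measurableEmbedding _)]
    have hint2 := (hmp.integrable_comp_emb (MeasurableEquiv.measurableEmbedding _)).2 hint
    rw [Measure.volume_eq_prod] at hint2 ⊢
    refine (integral_prod _ hint2).trans ?_
    simp only [Function.comp_apply]
    have inner : ∀ t : ℝ, (∫ y : Fin n → ℝ,
        (simp0 (n+1) s).indicator (fun x : Fin (n+1) → ℝ => ∏ i, x i ^ a i)
          ((MeasurableEquiv.piFinSuccAbove (fun _ : Fin (n+1) => ℝ) 0).symm (t, y))) =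
        (Set.Icc 0 s).indicator (fun t => ((∏ i : Fin n, ((a i.succ).factorial : ℝ)) /
          ((∑ i : Fin n, a i.succ + n).factorial : ℝ)) *
            (t ^ a 0 * (s - t) ^ (∑ i : Fin n, a i.succ + n))) t := by
      intro t
      by_cases ht : t ∈ Set.Icc 0 s
      · rw [Set.indicator_of_mem ht]
        have h1 : ∀ y : Fin n → ℝ,
            (simp0 (n+1) s).indicator (fun x : Fin (n+1) → ℝ => ∏ i, x i ^ a i)
            ((MeasurableEquiv.piFinSuccAbove (fun _ : Fin (n+1) => ℝ) 0).symm (t, y)) =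
            (simp0 n (s - t)).indicator (fun y => t ^ a 0 * ∏ i, y i ^ a i.succ) y := by
          intro y
          have hm : ((MeasurableEquiv.piFinSuccAbove (fun _ : Fin (n+1) => ℝ) 0).symm (t, y)
              ∈ simp0 (n+1) s) ↔ y ∈ simp0 n (s - t) := by
            simp only [simp0, Set.mem_ofPred_eq, MeasurableEquiv.piFinSuccAbove_symm_apply,
              Fin.insertNthEquiv_apply, Fin.insertNth_zero', Fin.forall_fin_succ, Fin.sum_univ_succ,
              Fin.cons_zero, Fin.cons_succ, ht.1, true_and]
            constructor <;> rintro ⟨h1, h2⟩ <;> exact ⟨h1, by linarith⟩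
          by_cases hy : y ∈ simp0 n (s - t)
          · rw [Set.indicator_of_mem hy, Set.indicator_of_mem (hm.2 hy)]
            simp [Fin.prod_univ_succ]
          · rw [Set.indicator_of_notMem hy, Set.indicator_of_notMem (fun h => hy (hm.1 h))]
        simp_rw [h1]
        rw [integral_indicator (simp0_closed _ _).measurableSet, integral_const_mul,
          ih (fun i => a i.succ) (s - t) (by linarith [ht.2])]
        ring
      · rw [Set.indicator_of_notMem ht]
        rw [← integral_zero (Fin n → ℝ) ℝ]
        congr 1
        funext y
        apply Set.indicator_of_notMem
        rintro ⟨h1, h2⟩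
        apply ht
        have h3 := Finset.single_le_sum (fun j _ => h1 j) (Finset.mem_univ 0)
        have h4 := h1 0
        simp only [MeasurableEquiv.piFinSuccAbove_symm_apply,
              Fin.insertNthEquiv_apply, Fin.insertNth_zero', Fin.cons_zero] at h3 h4 h2
        exact ⟨h4, h3.trans h2⟩
    simp_rw [inner]
    rw [integral_indicator measurableSet_Icc, integral_Icc_eq_integral_Ioc,
      ← intervalIntegral.integral_of_le hs, intervalIntegral.integral_const_mul, beta_nat,
      Fin.prod_univ_succ, Fin.sum_univ_succ]
    have := Nat.cast_ne_zero (R := ℝ) |>.2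
      (Nat.factorial_ne_zero (∑ i : Fin n, a i.succ + n))
    rw [show a 0 + (∑ i : Fin n, a i.succ + n) + 1 = a 0 + ∑ i : Fin n, a i.succ + (n + 1) by ring]
    field_simp

lemma Ktet_eq : Ktet = simp0 3 1 := by
  ext x
  simp only [Ktet, simp0, lam, Set.mem_ofPred_eq, Fin.forall_fin_succ, Fin.sum_univ_three]
  simp
  constructor
  · rintro ⟨h0, h1, h2, h3⟩; exact ⟨⟨h1, h2, h3⟩, by linarith⟩
  · rintro ⟨⟨h1, h2, h3⟩, h0⟩; exact ⟨by linarith, h1, h2, h3⟩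

lemma integral_eq_factT (r : MvPolynomial (Fin 3) ℝ) :
    ∫ x in Ktet, eval x r = factT 3 r := by
  rw [Ktet_eq]
  have hI : ∀ p : MvPolynomial (Fin 3) ℝ, IntegrableOn (fun x => eval x p) (simp0 3 1) := fun p =>
    ContinuousOn.integrableOn_compact (simp0_compact _ _) (MvPolynomial.continuous_eval p).continuousOn
  induction r using MvPolynomial.induction_on' with
  | add p q hp hq =>
    simp only [map_add]
    rw [integral_add (hI p) (hI q), hp, hq]
  | monomial s a =>
    have e : ∀ x : Fin 3 → ℝ, eval x (monomial s a) = a * ∏ i, x i ^ s i := by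
      intro x
      rw [eval_monomial, Finsupp.prod_fintype _ _ (fun _ => pow_zero _)]
    simp_rw [e]
    rw [integral_const_mul, dirichlet 3 (fun i => s i) 1 zero_le_one, factT_monomial]
    simp [Fin.sum_univ_three, Fin.prod_univ_three]

/-- every q ∈ P_{p-1} has a unique decomposition q = c + r with c constant
and r ∈ D = div Σ; moreover ∫_K r dx = 0, so P_{p-1} = ℝ·1 ⊕ D orthogonally in L²(K). -/
theorem unique_orthogonal_decomposition (p : ℕ) (hp : 1 ≤ p)
    (D : Set (MvPolynomial (Fin 3) ℝ))
    (hD : D = {q | ∃ Φ : Fin 3 → MvPolynomial (Fin 3) ℝ,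
        (∀ i, (Φ i).totalDegree ≤ p) ∧ normalVanish Φ ∧ q = divP Φ})
    (q : MvPolynomial (Fin 3) ℝ) (hq : q.totalDegree ≤ p - 1) :
    (∃! cr : ℝ × MvPolynomial (Fin 3) ℝ,
        cr.2 ∈ D ∧ q = MvPolynomial.C cr.1 + cr.2) ∧
    (∀ c : ℝ, ∀ r ∈ D, q = MvPolynomial.C c + r →
        ∫ x in Ktet, MvPolynomial.eval x r = 0) := by
  subst hD
  refine ⟨?_, ?_⟩
  · obtain ⟨c, Φ, h1, h2, h3⟩ := mem_W p hp q hq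
    refine ⟨(c, divP Φ), ⟨⟨Φ, h1, h2, rfl⟩, h3⟩, ?_⟩
    rintro ⟨c', r'⟩ ⟨⟨Φ', h1', h2', h4⟩, h3'⟩
    simp only at h4 h3'
    subst h4
    have h5 : factT 3 (C c' + divP Φ') = factT 3 (C c + divP Φ) := by rw [← h3', ← h3]
    rw [map_add, map_add, factT_div _ h2, factT_div _ h2', ← monomial_zero',
      factT_monomial, factT_monomial, add_zero, add_zero] at h5
    have hc : c' = c := by
      refine mul_right_cancel₀ ?_ h5
      positivity
    subst hc
    have h6 : divP Φ' = divP Φ := add_left_cancel (h3'.symm.trans h3)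
    rw [h6]
  · rintro c r ⟨Φ, -, h2, rfl⟩ -
    rw [integral_eq_factT, factT_div _ h2]
end
end
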